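/- Let x be an infinite word over a finite alphabet A that is linearly recurrent with constant K and aperiodic. Then for every nonempty finite word u over A, the word u^{K+1} (u repeated K+1 times) is not a factor of x. -/

import Mathlib

/-!
Suppose `u ^ (K + 1)` occurs in `x` and put `n = |u|`. While a window of length `n` slides over this
occurrence, the letter entering is always the letter leaving, so all the factors of length `n` read
in it are rearrangements of `u`. The window has `K * n + 1` positions there, and consecutive
occurrences of a factor of length `n` are at most `K * n` apart, so every factor of length `n` of
`x` is read in this way. Hence every window of length `n` of `x` is a rearrangement of the next one,
which forces the entering letter to be the leaving letter everywhere: `x` has period `n`.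
-/

/-- The factor of the infinite word `x` of length `n` starting at position `i`,
i.e. the word `x_i x_{i+1} ⋯ x_{i+n-1}`. -/
def seg {A : Type*} (x : ℕ → A) (i n : ℕ) : List A :=
  (List.range n).map fun k => x (i + k)

/-- `u` is a (nonempty, finite) factor of the infinite word `x`. -/
def IsFactor {A : Type*} (x : ℕ → A) (u : List A) : Prop :=
  u ≠ [] ∧ ∃ i, u = seg x i u.length

/-- `u` is a (finite) prefix of the infinite word `x`. -/
def IsPrefixOf {A : Type*} (x : ℕ → A) (u : List A) : Prop :=
  u = seg x 0 u.length

/-- The finite word `u` occurs in the finite word `v` at position `i`. -/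
def OccursAt {A : Type*} (u v : List A) (i : ℕ) : Prop :=
  i + u.length ≤ v.length ∧ (v.drop i).take u.length = u

/-- `w` is a return word to `u` in `x`: `w` is nonempty, `w ++ u` is a factor of
`x`, and `u` occurs exactly twice in `w ++ u`. -/
def IsReturn {A : Type*} (x : ℕ → A) (u w : List A) : Prop :=
  w ≠ [] ∧ IsFactor x (w ++ u) ∧ {i | OccursAt u (w ++ u) i}.ncard = 2

/-- The set of return words to `u` in `x`. -/
def Ret {A : Type*} (x : ℕ → A) (u : List A) : Set (List A) :=
  {w | IsReturn x u w}

/-- `x` is uniformly recurrent: every factor has a nonempty and finite set of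
return words. -/
def UniformlyRecurrent {A : Type*} (x : ℕ → A) : Prop :=
  ∀ u, IsFactor x u → (Ret x u).Nonempty ∧ (Ret x u).Finite

/-- `x` is aperiodic: there is no `n ≥ 1` with `x (i + n) = x i` for all `i`. -/
def Aperiodic {A : Type*} (x : ℕ → A) : Prop :=
  ¬ ∃ n : ℕ, 1 ≤ n ∧ ∀ i : ℕ, x (i + n) = x i

/-- `x` is linearly recurrent with constant `K`: it is uniformly recurrent and every
return word `w` to a factor `u` satisfies `|w| ≤ K·|u|`. -/
def LinearlyRecurrent {A : Type*} (x : ℕ → A) (K : ℕ) : Prop :=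
  UniformlyRecurrent x ∧ ∀ u, IsFactor x u → ∀ w ∈ Ret x u, w.length ≤ K * u.length

/-- Recurrence in the classical sense: every factor of `x` occurs arbitrarily far to the right.
Factors are given by their position `a` and length `n`. -/
def Recurrent {A : Type*} (x : ℕ → A) : Prop :=
  ∀ a n N : ℕ, ∃ b, N ≤ b ∧ seg x b n = seg x a n

section

open scoped List

variable {A : Type*} {x : ℕ → A}

theorem length_seg (x : ℕ → A) (i n : ℕ) : (seg x i n).length = n := by
  simp [seg]

theorem seg_succ (x : ℕ → A) (i n : ℕ) : seg x i (n + 1) = seg x i n ++ [x (i + n)] := by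
  simp [seg, List.range_succ]

theorem seg_succ' (x : ℕ → A) (i n : ℕ) : seg x i (n + 1) = x i :: seg x (i + 1) n := by
  simp [seg, List.range_succ_eq_map, Nat.add_assoc, Nat.add_comm 1]

theorem seg_add (x : ℕ → A) (i m n : ℕ) : seg x i (m + n) = seg x i m ++ seg x (i + m) n := by
  simp [seg, List.range_add, Nat.add_assoc]

theorem seg_eq_seg_iff {i j n : ℕ} : seg x i n = seg x j n ↔ ∀ k < n, x (i + k) = x (j + k) := by
  simp [seg]

theorem take_drop_seg (x : ℕ → A) {i t n m : ℕ} (h : t + n ≤ m) :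
    ((seg x i m).drop t).take n = seg x (i + t) n := by
  obtain ⟨e, rfl⟩ := Nat.exists_eq_add_of_le h
  rw [Nat.add_assoc, seg_add, seg_add, List.drop_left' (length_seg ..),
    List.take_left' (length_seg ..)]

theorem isFactor_seg (x : ℕ → A) (i : ℕ) {n : ℕ} (hn : 0 < n) : IsFactor x (seg x i n) :=
  ⟨List.ne_nil_of_length_pos (by rwa [length_seg]), i, by rw [length_seg]⟩

theorem occursAt_seg_iff {v : List A} {i m t : ℕ} :
    OccursAt v (seg x i m) t ↔ t + v.length ≤ m ∧ seg x (i + t) v.length = v := by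
  unfold OccursAt
  rw [length_seg]
  exact and_congr_right fun h => by rw [take_drop_seg x h]

theorem seg_mem_ret {p d n : ℕ} (hn : 0 < n) (hd : 0 < d) (hpd : seg x (p + d) n = seg x p n)
    (hfirst : ∀ t, 0 < t → t < d → seg x (p + t) n ≠ seg x p n) :
    seg x p d ∈ Ret x (seg x p n) := by
  have happend : seg x p d ++ seg x p n = seg x p (d + n) := by rw [seg_add, hpd]
  have hocc : {t | OccursAt (seg x p n) (seg x p (d + n)) t} = {0, d} := by
    ext t
    simp only [Set.mem_ofPred_eq, occursAt_seg_iff, length_seg, Nat.add_le_add_iff_right,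
      Set.mem_insert_iff, Set.mem_singleton_iff]
    constructor
    · rintro ⟨htd, ht⟩
      by_contra! hne
      exact hfirst t (by omega) (by omega) ht
    · rintro (rfl | rfl)
      · exact ⟨hd.le, rfl⟩
      · exact ⟨le_rfl, hpd⟩
  refine ⟨(isFactor_seg x p hd).1, ?_, ?_⟩
  · rw [happend]
    exact isFactor_seg x p (by omega)
  · rw [happend, hocc, Set.ncard_pair hd.ne]

theorem exists_pos_seg_eq_of_ret_nonempty {v : List A} (hv : (Ret x v).Nonempty) :
    ∃ c, 0 < c ∧ seg x c v.length = v := by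
  obtain ⟨w, hw, ⟨_, c, hc⟩, _⟩ := hv
  rw [List.length_append, seg_add] at hc
  have hw_pos := List.length_pos_of_ne_nil hw
  exact ⟨c + w.length, by omega, (List.append_inj_right hc (length_seg ..).symm).symm⟩

theorem recurrent_of_ret_nonempty (hRet : ∀ v, IsFactor x v → (Ret x v).Nonempty) :
    Recurrent x := by
  intro a n N
  induction N with
  | zero => exact ⟨a, Nat.zero_le a, rfl⟩
  | succ N ih =>
    obtain ⟨b, hNb, hb⟩ := ih
    -- The prefix of length `b + n + 1` contains the occurrence at `b`, and it recurs.
    obtain ⟨c, hc_pos, hc⟩ := exists_pos_seg_eq_of_ret_nonempty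
      (hRet _ (isFactor_seg x 0 (Nat.succ_pos (b + n))))
    refine ⟨c + b, by omega, Eq.trans ?_ hb⟩
    rw [length_seg, seg_eq_seg_iff] at hc
    rw [seg_eq_seg_iff]
    intro k hk
    simpa [Nat.add_assoc] using hc (b + k) (by omega)

theorem Recurrent.exists_next_seg_eq (hx : Recurrent x) {n B : ℕ} (hn : 0 < n)
    (hB : ∀ v, IsFactor x v → v.length = n → ∀ w ∈ Ret x v, w.length ≤ B) (p : ℕ) :
    ∃ q, p < q ∧ q ≤ p + B ∧ seg x q n = seg x p n := by
  classical
  have hex : ∃ d, 0 < d ∧ seg x (p + d) n = seg x p n := by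
    obtain ⟨b, hpb, hb⟩ := hx p n (p + 1)
    exact ⟨b - p, by omega, by rwa [Nat.add_sub_cancel' (by omega)]⟩
  obtain ⟨hd_pos, hd⟩ := Nat.find_spec hex
  have hreturn : seg x p (Nat.find hex) ∈ Ret x (seg x p n) :=
    seg_mem_ret hn hd_pos hd fun t ht_pos ht h => Nat.find_min hex ht ⟨ht_pos, h⟩
  have hd_le := hB _ (isFactor_seg x p hn) (length_seg ..) _ hreturn
  rw [length_seg] at hd_le
  exact ⟨p + Nat.find hex, by omega, by omega, hd⟩

theorem Recurrent.exists_seg_eq_of_le (hx : Recurrent x) {n B : ℕ} (hn : 0 < n)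
    (hB : ∀ v, IsFactor x v → v.length = n → ∀ w ∈ Ret x v, w.length ≤ B) {p m : ℕ}
    (hpm : p ≤ m) : ∃ q, m < q ∧ q ≤ m + B ∧ seg x q n = seg x p n := by
  induction m, hpm using Nat.le_induction with
  | base => exact hx.exists_next_seg_eq hn hB p
  | succ m _ ih =>
    obtain ⟨q, hmq, hqB, hq⟩ := ih
    rcases (Nat.succ_le_of_lt hmq).eq_or_lt with rfl | hlt
    · obtain ⟨r, hqr, hrB, hr⟩ := hx.exists_next_seg_eq hn hB (m + 1)
      exact ⟨r, hqr, hrB, hr.trans hq⟩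
    · exact ⟨q, hlt, by omega, hq⟩

theorem seg_succ_perm_seg_iff {i n : ℕ} :
    seg x (i + 1) n ~ seg x i n ↔ x (i + n) = x i := by
  have hslide : x i :: seg x (i + 1) n ~ x (i + n) :: seg x i n := by
    rw [← seg_succ', seg_succ]
    exact List.perm_append_singleton _ _
  constructor
  · intro h
    have hcons := (h.symm.cons (x i)).trans hslide
    simpa [← Multiset.coe_eq_coe, ← Multiset.cons_coe, eq_comm] using hcons
  · intro h
    rw [h] at hslide
    exact hslide.cons_inv

theorem seg_perm_seg_of_seg_add_eq {s n L k : ℕ} (hper : seg x (s + n) L = seg x s L)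
    (hk : k ≤ L) : seg x (s + k) n ~ seg x s n := by
  induction k with
  | zero => rfl
  | succ k ih =>
    have hletter : x (s + k + n) = x (s + k) := by
      rw [Nat.add_right_comm]
      exact seg_eq_seg_iff.1 hper k hk
    exact (seg_succ_perm_seg_iff.2 hletter).trans (ih (by omega))

theorem seg_eq_of_seg_eq_flatten_replicate {u : List A} {s k : ℕ}
    (h : seg x s ((k + 1) * u.length) = (List.replicate (k + 1) u).flatten) :
    seg x s u.length = u ∧ seg x (s + u.length) (k * u.length) = seg x s (k * u.length) := by
  have hleft : seg x s u.length ++ seg x (s + u.length) (k * u.length) =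
      u ++ (List.replicate k u).flatten := by
    rw [← seg_add, Nat.add_comm, ← Nat.succ_mul, h, List.replicate_succ, List.flatten_cons]
  have hright : seg x s (k * u.length) ++ seg x (s + k * u.length) u.length =
      (List.replicate k u).flatten ++ u := by
    rw [← seg_add, ← Nat.succ_mul, h, List.replicate_succ', List.flatten_concat]
  obtain ⟨hu, htail⟩ := List.append_inj hleft (length_seg ..)
  have hinit := List.append_inj_left hright (by simp [length_seg])
  exact ⟨hu, htail.trans hinit.symm⟩

theorem Recurrent.seg_perm_of_seg_eq_flatten_replicate (hx : Recurrent x) {u : List A} {i k : ℕ}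
    (hu : u ≠ [])
    (hB : ∀ v, IsFactor x v → v.length = u.length → ∀ w ∈ Ret x v, w.length ≤ k * u.length)
    (h : seg x i ((k + 1) * u.length) = (List.replicate (k + 1) u).flatten) (j : ℕ) :
    seg x j u.length ~ u := by
  obtain ⟨m, hjm, hm⟩ := hx i ((k + 1) * u.length) j
  obtain ⟨hmu, hper⟩ := seg_eq_of_seg_eq_flatten_replicate (hm.trans h)
  obtain ⟨q, hmq, hqB, hq⟩ := hx.exists_seg_eq_of_le (List.length_pos_of_ne_nil hu) hB hjm
  obtain ⟨t, rfl⟩ := Nat.exists_eq_add_of_le hmq.le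
  calc
    seg x j u.length ~ seg x (m + t) u.length := by rw [hq]
    _ ~ seg x m u.length := seg_perm_seg_of_seg_add_eq hper (by omega)
    _ ~ u := by rw [hmu]

end

theorem stmt10_general {A : Type*} (x : ℕ → A) (K : ℕ) (hx : Recurrent x)
    (hK : ∀ u, IsFactor x u → ∀ w ∈ Ret x u, w.length ≤ K * u.length) (hAp : Aperiodic x) :
    ∀ u : List A, u ≠ [] → ¬ IsFactor x (List.replicate (K + 1) u).flatten := by
  rintro u hu ⟨_, i, hi⟩
  have hlen : (List.replicate (K + 1) u).flatten.length = (K + 1) * u.length := by simp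
  rw [hlen] at hi
  have hperm : ∀ j, (seg x j u.length).Perm u :=
    hx.seg_perm_of_seg_eq_flatten_replicate hu (fun v hv hvu => hvu ▸ hK v hv) hi.symm
  exact hAp ⟨u.length, List.length_pos_of_ne_nil hu, fun j =>
    seg_succ_perm_seg_iff.1 ((hperm (j + 1)).trans (hperm j).symm)⟩

/-- If `x` is an aperiodic infinite word over a finite alphabet that is
linearly recurrent with constant `K`, then for every nonempty finite word `u`, the word
`u^{K+1}` is not a factor of `x`. -/
theorem stmt10 {A : Type*} [Fintype A] (x : ℕ → A) (K : ℕ)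
    (hLR : LinearlyRecurrent x K) (hAp : Aperiodic x) :
    ∀ u : List A, u ≠ [] → ¬ IsFactor x (List.replicate (K + 1) u).flatten := by
  exact stmt10_general x K (recurrent_of_ret_nonempty fun u hu => (hLR.1 u hu).1) hLR.2 hAp
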